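/- arXiv:1705.07737 — 4 statements merged into one kernel-verified Lean document; each statement's English description precedes it below -/
import Mathlib

section
/- Let A be an associative unital ℝ-algebra, let i, j ∈ A satisfy i^2 = −1, j^2 = −1, i*j = j*i, let ε : Fin m → ℝ, and let e : Fin m → A pairwise anticommute, each commute with i and with j, and satisfy (e k)^2 = (ε k) • 1. Let Q be the diagonal quadratic form on ℝ^(m+2) (functions Fin (m+2) → ℝ) with coefficients (ε 1, …, ε m, −1, 1). Then there exists an ℝ-algebra homomorphism from the Clifford algebra CliffordAlgebra Q to Matrix (Fin 2) (Fin 2) A sending the k-th generator ι(b k) to E k := !![e k, 0; 0, −(e k)] for k < m, the (m+1)-st generator to !![0, i; i, 0], and the (m+2)-nd generator to !![0, j; −j, 0]. -/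
/-!
For pairwise anticommuting elements `f k` the cross terms in `(∑ k, f k)²` cancel, so a family of
anticommuting elements with scalar squares represents the Clifford algebra of a diagonal form.
Doubling `e` to `diag(e, -e)` keeps its relations, and the sign makes the doubled family
anticommute with any antidiagonal matrix whose entries commute with every `e k`. The two
antidiagonal matrices `!![0, i; i, 0]` and `!![0, j; -j, 0]` anticommute because `i` and `j`
commute, and their squares are `i²` and `-j²`, so `i² = j²` yields generators of opposite sign.
-/

section CliffordSystem

variable {R A ι : Type*} [CommRing R] [Ring A] [Algebra R A]

theorem sum_mul_self_of_pairwise_anticommute {S : Type*} [NonUnitalNonAssocRing S]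
    (s : Finset ι) (f : ι → S)
    (hf : (s : Set ι).Pairwise fun k l => f k * f l = -(f l * f k)) :
    (∑ k ∈ s, f k) * ∑ k ∈ s, f k = ∑ k ∈ s, f k * f k := by
  classical
  induction s using Finset.induction_on with
  | empty => simp
  | insert k s hk ih =>
    have hs : (s : Set ι).Pairwise fun k l => f k * f l = -(f l * f k) :=
      hf.mono (Finset.coe_subset.2 (Finset.subset_insert k s))
    have cross : f k * ∑ l ∈ s, f l = -((∑ l ∈ s, f l) * f k) := by
      rw [Finset.mul_sum, Finset.sum_mul, ← Finset.sum_neg_distrib]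
      exact Finset.sum_congr rfl fun l hl =>
        hf (by simp) (by simp [hl]) (ne_of_mem_of_not_mem hl hk).symm
    rw [Finset.sum_insert hk, Finset.sum_insert hk, add_mul, mul_add, mul_add, cross, ih hs]
    abel

/-- A system of Clifford generators of signature `c`: pairwise anticommuting elements `g k` of an
`R`-algebra with `(g k)² = c k`. The signature takes values in `R`, so zero and non-unit squares
are allowed. -/
structure IsCliffordSystem (c : ι → R) (g : ι → A) : Prop where
  sq : ∀ k, g k ^ 2 = c k • (1 : A)
  anticomm : ∀ k l, k ≠ l → g k * g l = -(g l * g k)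

namespace IsCliffordSystem

theorem linearCombination_mul_self [Fintype ι] {c : ι → R} {g : ι → A}
    (h : IsCliffordSystem c g) (x : ι → R) :
    Fintype.linearCombination R g x * Fintype.linearCombination R g x =
      algebraMap R A (QuadraticMap.weightedSumSquares R c x) := by
  have anticomm (k l : ι) (hkl : k ≠ l) :
      (x k • g k) * (x l • g l) = -((x l • g l) * (x k • g k)) := by
    rw [smul_mul_smul_comm, smul_mul_smul_comm, h.anticomm k l hkl, smul_neg, mul_comm (x k)]
  have mul_self (k : ι) :
      (x k • g k) * (x k • g k) = algebraMap R A (c k • (x k * x k)) := by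
    rw [smul_mul_smul_comm, ← pow_two (g k), h.sq, smul_smul, mul_comm, ← smul_eq_mul (c k),
      Algebra.algebraMap_eq_smul_one]
  rw [Fintype.linearCombination_apply, QuadraticMap.weightedSumSquares_apply, map_sum,
    sum_mul_self_of_pairwise_anticommute _ _ fun k _ l _ => anticomm k l]
  exact Finset.sum_congr rfl fun k _ => mul_self k

/-- The representation of the Clifford algebra of the diagonal form with coefficients `c` given by
a system of Clifford generators of signature `c`. -/
noncomputable def lift [Fintype ι] {c : ι → R} {g : ι → A} (h : IsCliffordSystem c g) :
    CliffordAlgebra (QuadraticMap.weightedSumSquares R c) →ₐ[R] A :=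
  CliffordAlgebra.lift _ ⟨Fintype.linearCombination R g, h.linearCombination_mul_self⟩

theorem lift_ι_single [Fintype ι] [DecidableEq ι] {c : ι → R} {g : ι → A}
    (h : IsCliffordSystem c g) (k : ι) :
    h.lift (CliffordAlgebra.ι _ (Pi.single k 1)) = g k := by
  rw [lift, CliffordAlgebra.lift_ι_apply, Fintype.linearCombination_apply_single, one_smul]

theorem snoc {n : ℕ} {c : Fin n → R} {g : Fin n → A} (h : IsCliffordSystem c g) {d : R} {b : A}
    (hb : b ^ 2 = d • (1 : A)) (hgb : ∀ k, g k * b = -(b * g k)) :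
    IsCliffordSystem (Fin.snoc c d : Fin (n + 1) → R) (Fin.snoc g b : Fin (n + 1) → A) where
  sq k := by
    cases k using Fin.lastCases with
    | last => simpa only [Fin.snoc_last] using hb
    | cast k => simpa only [Fin.snoc_castSucc] using h.sq k
  anticomm k l hkl := by
    cases k using Fin.lastCases with
    | last =>
      cases l using Fin.lastCases with
      | last => exact absurd rfl hkl
      | cast l => simp only [Fin.snoc_last, Fin.snoc_castSucc, hgb, neg_neg]
    | cast k =>
      cases l using Fin.lastCases with
      | last => simp only [Fin.snoc_last, Fin.snoc_castSucc, hgb]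
      | cast l =>
        simpa only [Fin.snoc_castSucc] using h.anticomm k l (ne_of_apply_ne Fin.castSucc hkl)

theorem diag_neg {c : ι → R} {e : ι → A} (h : IsCliffordSystem c e) :
    IsCliffordSystem c fun k => !![e k, 0; 0, -(e k)] where
  sq k := by
    simp [pow_two, ← pow_two (e k), h.sq, Matrix.one_fin_two]
  anticomm k l hkl := by
    simp [h.anticomm k l hkl]

end IsCliffordSystem

end CliffordSystem

section Conformal

variable {R A : Type*} [CommRing R] [Ring A] [Algebra R A] {m : ℕ}

theorem diag_neg_mul_antidiag {S : Type*} [NonUnitalNonAssocRing S] {a b x : S}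
    (ha : x * a = a * x) (hb : x * b = b * x) :
    !![x, 0; 0, -x] * !![0, a; b, 0] = -(!![0, a; b, 0] * !![x, 0; 0, -x]) := by
  simp [ha, hb]

theorem antidiag_sq {a b : A} {r : R} (hab : a * b = r • (1 : A))
    (hba : b * a = r • (1 : A)) :
    !![0, a; b, 0] ^ 2 = r • (1 : Matrix (Fin 2) (Fin 2) A) := by
  simp [pow_two, hab, hba, Matrix.one_fin_two]

theorem antidiag_mul_antidiag_neg {S : Type*} [NonUnitalNonAssocRing S] {i j : S}
    (hij : i * j = j * i) :
    !![0, i; i, 0] * !![0, j; -j, 0] = -(!![0, j; -j, 0] * !![0, i; i, 0]) := by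
  simp [hij]

/-- The generators obtained from `e` by conformal compactification: the `diag(e k, -e k)`, followed
by the two antidiagonal matrices built from `i` and `j`. -/
def conformalGenerators (e : Fin m → A) (i j : A) : Fin (m + 2) → Matrix (Fin 2) (Fin 2) A :=
  Fin.snoc (Fin.snoc (fun k => !![e k, 0; 0, -(e k)]) !![0, i; i, 0] : Fin (m + 1) → _)
    !![0, j; -j, 0]

theorem IsCliffordSystem.conformalGenerators {ε : Fin m → R} {e : Fin m → A}
    (h : IsCliffordSystem ε e) {i j : A} {a b : R}
    (hi : i ^ 2 = a • (1 : A)) (hj : j ^ 2 = -(b • (1 : A))) (hij : i * j = j * i)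
    (hei : ∀ k, e k * i = i * e k) (hej : ∀ k, e k * j = j * e k) :
    IsCliffordSystem (Fin.snoc (Fin.snoc ε a) b : Fin (m + 2) → R)
      (conformalGenerators e i j) := by
  have hi' : i * i = a • (1 : A) := by rw [← pow_two, hi]
  have hj' : j * j = -(b • (1 : A)) := by rw [← pow_two, hj]
  have hI : IsCliffordSystem (Fin.snoc ε a : Fin (m + 1) → R)
      (Fin.snoc (fun k => !![e k, 0; 0, -(e k)]) !![0, i; i, 0] : Fin (m + 1) → _) :=
    h.diag_neg.snoc (antidiag_sq hi' hi') fun k => diag_neg_mul_antidiag (hei k) (hei k)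
  refine hI.snoc (antidiag_sq (by simp [hj']) (by simp [hj'])) fun k => ?_
  cases k using Fin.lastCases with
  | last => simpa only [Fin.snoc_last] using antidiag_mul_antidiag_neg hij
  | cast k =>
    simpa only [Fin.snoc_castSucc] using diag_neg_mul_antidiag (hej k) (by simp [hej k])

theorem conformal_compactification_cliffordHom_general
    (i j : A) {a b : R} (hi : i ^ 2 = a • (1 : A)) (hj : j ^ 2 = -(b • (1 : A)))
    (hij : i * j = j * i) (ε : Fin m → R) (e : Fin m → A)
    (he : ∀ k l, k ≠ l → e k * e l = -(e l * e k))
    (hei : ∀ k, e k * i = i * e k) (hej : ∀ k, e k * j = j * e k)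
    (hsq : ∀ k, e k ^ 2 = ε k • (1 : A))
    (Q : QuadraticForm R (Fin (m + 2) → R))
    (hQ : ∀ x, Q x = ∑ μ, (Fin.snoc (Fin.snoc ε a) b : Fin (m + 2) → R) μ * x μ ^ 2) :
    ∃ f : CliffordAlgebra Q →ₐ[R] Matrix (Fin 2) (Fin 2) A,
      (∀ k : Fin m,
        f (CliffordAlgebra.ι Q (Pi.single k.castSucc.castSucc 1)) = !![e k, 0; 0, -(e k)]) ∧
      f (CliffordAlgebra.ι Q (Pi.single (Fin.last m).castSucc 1)) = !![0, i; i, 0] ∧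
      f (CliffordAlgebra.ι Q (Pi.single (Fin.last (m + 1)) 1)) = !![0, j; -j, 0] := by
  obtain rfl : Q = QuadraticMap.weightedSumSquares R
      (Fin.snoc (Fin.snoc ε a) b : Fin (m + 2) → R) := by
    ext x
    simp only [hQ, QuadraticMap.weightedSumSquares_apply, smul_eq_mul, pow_two]
  have hE := IsCliffordSystem.conformalGenerators ⟨hsq, he⟩ hi hj hij hei hej
  refine ⟨hE.lift, fun k => (hE.lift_ι_single _).trans ?_, (hE.lift_ι_single _).trans ?_,
    (hE.lift_ι_single _).trans ?_⟩ <;>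
    simp only [conformalGenerators, Fin.snoc_castSucc, Fin.snoc_last]

end Conformal

/-- conformal compactification at the level of Clifford algebras.
Given commuting imaginary units `i, j` in an ℝ-algebra `A` and pairwise
anticommuting elements `e k` (commuting with `i` and `j`) with
`(e k)² = ε k • 1`, and `Q` the diagonal quadratic form on `ℝ^(m+2)` with
coefficients `(ε 0, …, ε (m-1), -1, 1)`, there is an ℝ-algebra homomorphism
`CliffordAlgebra Q →ₐ[ℝ] Matrix (Fin 2) (Fin 2) A` sending the generator
`ι (Pi.single k 1)` to `!![e k, 0; 0, -(e k)]` for `k < m`, the `(m+1)`-st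
generator to `!![0, i; i, 0]` and the `(m+2)`-nd generator to
`!![0, j; -j, 0]`. -/
theorem conformal_compactification_cliffordHom
    {A : Type*} [Ring A] [Algebra ℝ A] {m : ℕ}
    (i j : A) (hi : i ^ 2 = -1) (hj : j ^ 2 = -1) (hij : i * j = j * i)
    (ε : Fin m → ℝ) (e : Fin m → A)
    (he : ∀ k l, k ≠ l → e k * e l = -(e l * e k))
    (hei : ∀ k, e k * i = i * e k) (hej : ∀ k, e k * j = j * e k)
    (hsq : ∀ k, e k ^ 2 = ε k • (1 : A))
    (Q : QuadraticForm ℝ (Fin (m + 2) → ℝ))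
    (hQ : ∀ x, Q x = ∑ μ, (Fin.snoc (Fin.snoc ε (-1)) 1 : Fin (m + 2) → ℝ) μ * x μ ^ 2) :
    ∃ f : CliffordAlgebra Q →ₐ[ℝ] Matrix (Fin 2) (Fin 2) A,
      (∀ k : Fin m,
        f (CliffordAlgebra.ι Q (Pi.single (Fin.castLE (by omega) k) 1)) =
          !![e k, 0; 0, -(e k)]) ∧
      f (CliffordAlgebra.ι Q (Pi.single (⟨m, by omega⟩ : Fin (m + 2)) 1)) =
        !![0, i; i, 0] ∧
      f (CliffordAlgebra.ι Q (Pi.single (⟨m + 1, by omega⟩ : Fin (m + 2)) 1)) =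
        !![0, j; -j, 0] := by
  exact conformal_compactification_cliffordHom_general i j (a := -1) (b := 1)
    (by simpa using hi) (by simpa using hj) hij ε e he hei hej hsq Q hQ
end

section
/- Define paravectors E : Fin 4 → Matrix (Fin 2) (Fin 2) (ℂ × ℂ) by E 0 = 1, E k = e k for k = 1, 2, 3, conjugates Ē 0 = 1, Ē k = −(e k), and the spin angular momentum s μ ν := (E μ * Ē ν − E ν * Ē μ) / 4. Then for all μ, ν, ρ, σ : Fin 4 the Lorentz algebra commutation relations hold: [s μ ν, s ρ σ] = (g ν ρ) • s μ σ − (g μ ρ) • s ν σ + (g μ σ) • s ν ρ − (g ν σ) • s μ ρ, where [X, Y] = X*Y − Y*X and g = diag(1, 1, 1, −1). In particular the s μ ν give a representation of the Lie algebra of the Lorentz group SO(3,1). -/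
/-- The bicomplex unit `i := (Complex.I, Complex.I)`. -/
def bcI : ℂ × ℂ := (Complex.I, Complex.I)

/-- The bicomplex unit `j := (Complex.I, -Complex.I)`. -/
def bcJ : ℂ × ℂ := (Complex.I, -Complex.I)

/-- Minkowski paravector generator `e₁ := !![i, 0; 0, -i]`. -/
def mink1 : Matrix (Fin 2) (Fin 2) (ℂ × ℂ) := !![bcI, 0; 0, -bcI]

/-- Minkowski paravector generator `e₂ := !![0, i; i, 0]`. -/
def mink2 : Matrix (Fin 2) (Fin 2) (ℂ × ℂ) := !![0, bcI; bcI, 0]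

/-- Minkowski paravector generator `e₃ := !![0, j; -j, 0]`. -/
def mink3 : Matrix (Fin 2) (Fin 2) (ℂ × ℂ) := !![0, bcJ; -bcJ, 0]

/-- The paravector `E μ`, with `E 0 = 1`, `E k = e k`. -/
def minkPara : Fin 4 → Matrix (Fin 2) (Fin 2) (ℂ × ℂ) := ![1, mink1, mink2, mink3]

/-- The conjugate paravector `Ē μ`, with `Ē 0 = 1`, `Ē k = -(e k)`. -/
def minkParaBar : Fin 4 → Matrix (Fin 2) (Fin 2) (ℂ × ℂ) :=
  ![1, -mink1, -mink2, -mink3]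

/-- The Minkowski metric `g = diag(1, 1, 1, -1)`. -/
def minkMetric : Fin 4 → Fin 4 → ℝ :=
  fun μ ν => if μ = ν then ![1, 1, 1, -1] μ else 0

/-- The spin angular momentum `s μ ν := (E μ * Ē ν - E ν * Ē μ) / 4`. -/
noncomputable def minkSpin (μ ν : Fin 4) : Matrix (Fin 2) (Fin 2) (ℂ × ℂ) :=
  (1 / 4 : ℝ) • (minkPara μ * minkParaBar ν - minkPara ν * minkParaBar μ)

/-!
The spin `s μ ν` and its conjugate `s̄ μ ν = (Ē μ * E ν - Ē ν * E μ) / 4` act on paravectors by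
infinitesimal Lorentz transformations, in the intertwining form
`s μ ν * E ρ - E ρ * s̄ μ ν = g ν ρ • E μ - g μ ρ • E ν`. The Clifford relations are symmetric
under exchanging `E` and `Ē`, so `s̄ μ ν * Ē σ - Ē σ * s μ ν` has the same shape, and the Leibniz
rule gives `[s μ ν, E ρ * Ē σ]`. Antisymmetrizing in `ρ`, `σ` yields the Lorentz algebra.
-/

section Paravectors

variable {ι R A : Type*} [CommRing R] [Ring A] [Algebra R A]

/-- A family of paravectors `E` with conjugates `Ē`, satisfying the polarized Clifford relations
of the metric `g`. Conjugation is recorded only through the family `Ē`, which makes the notion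
symmetric in `E` and `Ē`. -/
structure IsParavectorPair (g : ι → ι → R) (E Ē : ι → A) : Prop where
  mul_conj_add_swap : ∀ μ ν, E μ * Ē ν + E ν * Ē μ = (2 * g μ ν) • (1 : A)
  conj_mul_add_swap : ∀ μ ν, Ē μ * E ν + Ē ν * E μ = (2 * g μ ν) • (1 : A)

variable (R) in
/-- The spin angular momentum `(E μ * Ē ν - E ν * Ē μ) / 4`. The ring `R` in which `4` is inverted
is explicit since it cannot be read off from `E` and `Ē`; `paravectorSpin R Ē E` is the conjugate
spin. -/
def paravectorSpin [Invertible (4 : R)] (E Ē : ι → A) (μ ν : ι) : A :=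
  ⅟(4 : R) • (E μ * Ē ν - E ν * Ē μ)

namespace IsParavectorPair

variable {g : ι → ι → R} {E Ē : ι → A}

theorem symm (h : IsParavectorPair g E Ē) : IsParavectorPair g Ē E :=
  ⟨h.conj_mul_add_swap, h.mul_conj_add_swap⟩

theorem mul_conj_mul_sub_rotate (h : IsParavectorPair g E Ē) (μ ν ρ : ι) :
    E μ * Ē ν * E ρ - E ρ * Ē μ * E ν = (2 * g ν ρ) • E μ - (2 * g μ ρ) • E ν :=
  calc
    E μ * Ē ν * E ρ - E ρ * Ē μ * E ν
      = E μ * (Ē ν * E ρ + Ē ρ * E ν) - (E μ * Ē ρ + E ρ * Ē μ) * E ν := by noncomm_ring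
    _ = (2 * g ν ρ) • E μ - (2 * g μ ρ) • E ν := by
      rw [h.conj_mul_add_swap, h.mul_conj_add_swap, mul_smul_one, smul_one_mul]

theorem spin_mul_sub_mul_spin [Invertible (4 : R)] (h : IsParavectorPair g E Ē) (μ ν ρ : ι) :
    paravectorSpin R E Ē μ ν * E ρ - E ρ * paravectorSpin R Ē E μ ν =
      g ν ρ • E μ - g μ ρ • E ν :=
  calc
    paravectorSpin R E Ē μ ν * E ρ - E ρ * paravectorSpin R Ē E μ ν
      = ⅟(4 : R) •
          ((E μ * Ē ν * E ρ - E ρ * Ē μ * E ν) - (E ν * Ē μ * E ρ - E ρ * Ē ν * E μ)) := by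
        rw [paravectorSpin, paravectorSpin, smul_mul_assoc, mul_smul_comm, ← smul_sub]
        noncomm_ring
    _ = ⅟(4 : R) • (4 : R) • (g ν ρ • E μ - g μ ρ • E ν) := by
      rw [h.mul_conj_mul_sub_rotate μ ν, h.mul_conj_mul_sub_rotate ν μ]
      module
    _ = g ν ρ • E μ - g μ ρ • E ν := invOf_smul_smul _ _

theorem lie_spin_mul_conj [Invertible (4 : R)] (h : IsParavectorPair g E Ē) (μ ν ρ σ : ι) :
    ⁅paravectorSpin R E Ē μ ν, E ρ * Ē σ⁆ =
      g ν ρ • (E μ * Ē σ) - g μ ρ • (E ν * Ē σ) +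
        g ν σ • (E ρ * Ē μ) - g μ σ • (E ρ * Ē ν) :=
  calc
    ⁅paravectorSpin R E Ē μ ν, E ρ * Ē σ⁆
      = (paravectorSpin R E Ē μ ν * E ρ - E ρ * paravectorSpin R Ē E μ ν) * Ē σ +
          E ρ * (paravectorSpin R Ē E μ ν * Ē σ - Ē σ * paravectorSpin R E Ē μ ν) := by
        rw [Ring.lie_def]
        noncomm_ring
    _ = (g ν ρ • E μ - g μ ρ • E ν) * Ē σ + E ρ * (g ν σ • Ē μ - g μ σ • Ē ν) := by
      rw [h.spin_mul_sub_mul_spin, h.symm.spin_mul_sub_mul_spin]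
    _ = g ν ρ • (E μ * Ē σ) - g μ ρ • (E ν * Ē σ) +
          g ν σ • (E ρ * Ē μ) - g μ σ • (E ρ * Ē ν) := by
      simp only [smul_mul_assoc, mul_smul_comm, sub_mul, mul_sub]
      module

theorem of_pairwise_anticomm {n : ℕ} {e : Fin n → A} {q : Fin n → R}
    (mul_self : ∀ k, e k * e k = -(q k • (1 : A)))
    (anticomm : Pairwise fun k l ↦ e k * e l = -(e l * e k)) :
    IsParavectorPair (Matrix.diagonal (Fin.cons 1 q))
      (Fin.cons 1 e : Fin (n + 1) → A) (Fin.cons 1 (-e)) := by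
  have clifford (k l : Fin n) :
      -(e k * e l) + -(e l * e k) = if k = l then (2 * q k) • (1 : A) else 0 := by
    split_ifs with hkl
    · rw [← hkl, mul_self]
      module
    · rw [anticomm hkl, neg_neg, add_neg_cancel]
  constructor <;>
  · intro μ ν
    cases μ using Fin.cases <;> cases ν using Fin.cases <;>
      simp [Matrix.diagonal_apply, clifford, one_add_one_eq_two, ofNat_smul_eq_nsmul,
        (Fin.succ_ne_zero _).symm]

end IsParavectorPair

theorem lie_paravectorSpin [Invertible (4 : R)] (E Ē : ι → A) (X : A) (ρ σ : ι) :
    ⁅X, paravectorSpin R E Ē ρ σ⁆ = ⅟(4 : R) • (⁅X, E ρ * Ē σ⁆ - ⁅X, E σ * Ē ρ⁆) := by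
  rw [paravectorSpin, Ring.lie_def, mul_smul_comm, smul_mul_assoc, ← smul_sub, Ring.lie_def,
    Ring.lie_def]
  noncomm_ring

theorem minkowski_spin_lorentz_algebra_general [Invertible (4 : R)] {g : ι → ι → R} {E Ē : ι → A}
    (h : IsParavectorPair g E Ē) (μ ν ρ σ : ι) :
    ⁅paravectorSpin R E Ē μ ν, paravectorSpin R E Ē ρ σ⁆ =
      g ν ρ • paravectorSpin R E Ē μ σ - g μ ρ • paravectorSpin R E Ē ν σ +
        g μ σ • paravectorSpin R E Ē ν ρ - g ν σ • paravectorSpin R E Ē μ ρ := by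
  rw [lie_paravectorSpin, h.lie_spin_mul_conj, h.lie_spin_mul_conj]
  simp only [paravectorSpin]
  module

end Paravectors

theorem bcI_mul_bcI : bcI * bcI = -1 := by
  ext <;> simp [bcI]

theorem bcJ_mul_bcJ : bcJ * bcJ = -1 := by
  ext <;> simp [bcJ]

theorem mink1_mul_mink1 : mink1 * mink1 = -1 := by
  simp [mink1, Matrix.one_fin_two, bcI_mul_bcI]

theorem mink2_mul_mink2 : mink2 * mink2 = -1 := by
  simp [mink2, Matrix.one_fin_two, bcI_mul_bcI]

theorem mink3_mul_mink3 : mink3 * mink3 = 1 := by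
  simp [mink3, Matrix.one_fin_two, bcJ_mul_bcJ]

theorem mink1_mul_mink2 : mink1 * mink2 = -(mink2 * mink1) := by
  simp [mink1, mink2]

theorem mink1_mul_mink3 : mink1 * mink3 = -(mink3 * mink1) := by
  simp [mink1, mink3, mul_comm]

theorem mink2_mul_mink3 : mink2 * mink3 = -(mink3 * mink2) := by
  simp [mink2, mink3, mul_comm]

theorem isParavectorPair_mink : IsParavectorPair minkMetric minkPara minkParaBar := by
  have mul_self (k : Fin 3) :
      ![mink1, mink2, mink3] k * ![mink1, mink2, mink3] k = -((![1, 1, -1] k : ℝ) • 1) := by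
    fin_cases k <;> simp [mink1_mul_mink1, mink2_mul_mink2, mink3_mul_mink3]
  have anticomm : Pairwise fun k l : Fin 3 ↦
      ![mink1, mink2, mink3] k * ![mink1, mink2, mink3] l =
        -(![mink1, mink2, mink3] l * ![mink1, mink2, mink3] k) := by
    intro k l hkl
    fin_cases k <;> fin_cases l <;>
      simp [mink1_mul_mink2, mink1_mul_mink3, mink2_mul_mink3] at hkl ⊢
  have metric_eq : minkMetric = Matrix.diagonal (Fin.cons 1 ![1, 1, -1]) := rfl
  have para_eq : minkPara = Fin.cons 1 ![mink1, mink2, mink3] := rfl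
  have paraBar_eq : minkParaBar = Fin.cons 1 (-![mink1, mink2, mink3]) := by
    simp only [Matrix.neg_cons, Matrix.neg_empty]
    rfl
  rw [metric_eq, para_eq, paraBar_eq]
  exact .of_pairwise_anticomm mul_self anticomm

theorem minkSpin_eq_paravectorSpin [Invertible (4 : ℝ)] (μ ν : Fin 4) :
    minkSpin μ ν = paravectorSpin ℝ minkPara minkParaBar μ ν := by
  rw [minkSpin, paravectorSpin, one_div, invOf_eq_inv]

/-- the spin angular momentum operators satisfy the Lorentz
algebra (so(3,1)) commutation relations
`[s μ ν, s ρ σ] = g ν ρ • s μ σ - g μ ρ • s ν σ + g μ σ • s ν ρ - g ν σ • s μ ρ`. -/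
theorem minkowski_spin_lorentz_algebra :
    ∀ μ ν ρ σ : Fin 4,
      minkSpin μ ν * minkSpin ρ σ - minkSpin ρ σ * minkSpin μ ν =
        minkMetric ν ρ • minkSpin μ σ - minkMetric μ ρ • minkSpin ν σ +
          minkMetric μ σ • minkSpin ν ρ - minkMetric ν σ • minkSpin μ ρ := by
  intro μ ν ρ σ
  let _ : Invertible (4 : ℝ) := invertibleOfNonzero four_ne_zero
  simp only [minkSpin_eq_paravectorSpin]
  exact minkowski_spin_lorentz_algebra_general isParavectorPair_mink μ ν ρ σ
end

section
/- Let B := Matrix (Fin 2) (Fin 2) (ℂ × ℂ) and let E 1, …, E 5 in Matrix (Fin 2) (Fin 2) B be as given. Define paravectors F : Fin 6 → Matrix (Fin 2) (Fin 2) B by F 0 = 1 and F μ = E μ for μ = 1, …, 5, and conjugates F̄ 0 = 1, F̄ μ = −(E μ). Then for all μ, ν : Fin 6, (F μ * F̄ ν + F ν * F̄ μ) / 2 = (g μ ν) • 1 where g is the diagonal matrix diag(1, 1, 1, −1, 1, −1). -/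
/-- Ambient-space generator `E 1 := !![e₁, 0; 0, -e₁]`. -/
def ads1 : Matrix (Fin 2) (Fin 2) (Matrix (Fin 2) (Fin 2) (ℂ × ℂ)) :=
  !![mink1, 0; 0, -mink1]

/-- Ambient-space generator `E 2 := !![e₂, 0; 0, -e₂]`. -/
def ads2 : Matrix (Fin 2) (Fin 2) (Matrix (Fin 2) (Fin 2) (ℂ × ℂ)) :=
  !![mink2, 0; 0, -mink2]

/-- Ambient-space generator `E 3 := !![e₃, 0; 0, -e₃]`. -/
def ads3 : Matrix (Fin 2) (Fin 2) (Matrix (Fin 2) (Fin 2) (ℂ × ℂ)) :=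
  !![mink3, 0; 0, -mink3]

/-- Ambient-space generator `E 4 := !![0, i•1; i•1, 0]`. -/
def ads4 : Matrix (Fin 2) (Fin 2) (Matrix (Fin 2) (Fin 2) (ℂ × ℂ)) :=
  !![0, bcI • 1; bcI • 1, 0]

/-- Ambient-space generator `E 5 := !![0, j•1; -(j•1), 0]`. -/
def ads5 : Matrix (Fin 2) (Fin 2) (Matrix (Fin 2) (Fin 2) (ℂ × ℂ)) :=
  !![0, bcJ • 1; -(bcJ • 1), 0]

/-- The paravector `F μ`, with `F 0 = 1`, `F μ = E μ` for `μ = 1, …, 5`. -/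
def adsPara : Fin 6 → Matrix (Fin 2) (Fin 2) (Matrix (Fin 2) (Fin 2) (ℂ × ℂ)) :=
  ![1, ads1, ads2, ads3, ads4, ads5]

/-- The conjugate paravector `F̄ μ`, with `F̄ 0 = 1`, `F̄ μ = -(E μ)`. -/
def adsParaBar : Fin 6 → Matrix (Fin 2) (Fin 2) (Matrix (Fin 2) (Fin 2) (ℂ × ℂ)) :=
  ![1, -ads1, -ads2, -ads3, -ads4, -ads5]

/-- The ambient metric `g = diag(1, 1, 1, -1, 1, -1)`. -/
def adsMetric : Fin 6 → Fin 6 → ℝ :=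
  fun μ ν => if μ = ν then ![1, 1, 1, -1, 1, -1] μ else 0

/-! The matrices `!![e a, 0; 0, -e a]`, `!![0, x; x, 0]` and `!![0, y; -y, 0]` anticommute pairwise
when the `e a` do and `x`, `y` commute with each other and with every `e a`. This doubling step,
started from the single generator `i` with `x = i` and `y = j`, produces `e₁, e₂, e₃`; repeated
with the scalar matrices of `i` and `j`, it produces `E 1, …, E 5`. In the real product of
paravectors, conjugation cancels the terms mixing `1` with a generator and leaves minus the
anticommutator of two generators. -/

/-- A family of pairwise anticommuting generators with scalar squares: the defining relations of
the Clifford algebra of the diagonal quadratic form with coefficients `q`. -/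
structure IsCliffordFamily {ι R A : Type*} [CommRing R] [Ring A] [Algebra R A]
    (q : ι → R) (e : ι → A) : Prop where
  mul_self : ∀ a, e a * e a = q a • (1 : A)
  mul_add_mul_swap : Pairwise fun a b ↦ e a * e b + e b * e a = 0

section

variable {A : Type*} [Ring A] {n : ℕ}

/-- The paravectors `1, e 0, …, e (n - 1)` of a family of generators: `e` preceded by the unit. -/
def paravector (e : Fin n → A) : Fin (n + 1) → A :=
  Matrix.vecCons 1 e

/-- The Clifford conjugates `1, -e 0, …, -e (n - 1)` of the paravectors of `e`. -/
def paravectorConj (e : Fin n → A) : Fin (n + 1) → A :=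
  Matrix.vecCons 1 (-e)

/-- The conformal compactification of a family of generators `e`: it adds two generators, built
from elements `x` and `y` of the same algebra, and doubles the matrix size. The new generators
come last. -/
def conformalCompactification (e : Fin n → A) (x y : A) :
    Fin (n + 2) → Matrix (Fin 2) (Fin 2) A :=
  Fin.snoc (α := fun _ ↦ Matrix (Fin 2) (Fin 2) A)
    (Fin.snoc (α := fun _ ↦ Matrix (Fin 2) (Fin 2) A)
      (fun a ↦ !![e a, 0; 0, -e a]) !![0, x; x, 0])
    !![0, y; -y, 0]

end

namespace IsCliffordFamily

variable {R A : Type*} [CommRing R] [Ring A] [Algebra R A]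

theorem of_subsingleton {ι : Type*} [Subsingleton ι] {q : ι → R} {e : ι → A}
    (he : ∀ a, e a * e a = q a • (1 : A)) : IsCliffordFamily q e where
  mul_self := he
  mul_add_mul_swap a b hab := absurd (Subsingleton.elim a b) hab

theorem diagonal_self_neg {ι : Type*} {q : ι → R} {e : ι → A} (he : IsCliffordFamily q e) :
    IsCliffordFamily q fun a ↦ !![e a, 0; 0, -e a] where
  mul_self a := by simp [he.mul_self, Matrix.one_fin_two]
  mul_add_mul_swap a b hab := by simp [he.mul_add_mul_swap hab, ← Matrix.ext_iff]

variable {n : ℕ} {q : Fin n → R} {e : Fin n → A}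

theorem snoc (he : IsCliffordFamily q e) {c : R} {x : A} (hx : x * x = c • (1 : A))
    (hex : ∀ a, e a * x + x * e a = 0) :
    IsCliffordFamily (Fin.snoc (α := fun _ ↦ R) q c) (Fin.snoc (α := fun _ ↦ A) e x) where
  mul_self a := by
    cases a using Fin.lastCases with
    | last => simpa using hx
    | cast a => simpa using he.mul_self a
  mul_add_mul_swap a b hab := by
    cases a using Fin.lastCases with
    | last =>
      cases b using Fin.lastCases with
      | last => exact absurd rfl hab
      | cast b => simpa [add_comm] using hex b
    | cast a =>
      cases b using Fin.lastCases with
      | last => simpa using hex a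
      | cast b => simpa using he.mul_add_mul_swap (ne_of_apply_ne Fin.castSucc hab)

theorem conformalCompactification (he : IsCliffordFamily q e) {c d : R} {x y : A}
    (hx : x * x = c • (1 : A)) (hy : y * y = d • (1 : A)) (hex : ∀ a, Commute (e a) x)
    (hey : ∀ a, Commute (e a) y) (hxy : Commute x y) :
    IsCliffordFamily (Fin.snoc (α := fun _ ↦ R) (Fin.snoc (α := fun _ ↦ R) q c) (-d))
      (conformalCompactification e x y) := by
  refine (he.diagonal_self_neg.snoc ?_ fun a ↦ ?_).snoc ?_ fun a ↦ ?_
  · simp [hx, Matrix.one_fin_two]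
  · simp [(hex a).eq, ← Matrix.ext_iff]
  · simp [hy, Matrix.one_fin_two]
  · cases a using Fin.lastCases with
    | last => simp [hxy.eq, ← Matrix.ext_iff]
    | cast a => simp [(hey a).eq, ← Matrix.ext_iff]

theorem paravector_mul_conj_add (he : IsCliffordFamily q e) (μ ν : Fin (n + 1)) :
    paravector e μ * paravectorConj e ν + paravector e ν * paravectorConj e μ =
      (2 * Matrix.diagonal (Matrix.vecCons 1 (-q)) μ ν) • (1 : A) := by
  cases μ using Fin.cases with
  | zero =>
    cases ν using Fin.cases with
    | zero => simp [paravector, paravectorConj, two_smul, one_add_one_eq_two]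
    | succ b => simp [paravector, paravectorConj, (Fin.succ_ne_zero b).symm]
  | succ a =>
    cases ν using Fin.cases with
    | zero => simp [paravector, paravectorConj]
    | succ b =>
      obtain rfl | hab := eq_or_ne a b
      · simp [paravector, paravectorConj, he.mul_self, two_mul, add_smul]
      · have hanti : -(e a * e b) + -(e b * e a) = 0 := by
          rw [← neg_add, he.mul_add_mul_swap hab, neg_zero]
        simpa [paravector, paravectorConj, hab] using hanti

end IsCliffordFamily

theorem bcI_mul_self : bcI * bcI = (-1 : ℝ) • 1 := by
  ext <;> simp [bcI]

theorem bcJ_mul_self : bcJ * bcJ = (-1 : ℝ) • 1 := by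
  ext <;> simp [bcJ]

theorem minkowski_eq_conformalCompactification :
    ![mink1, mink2, mink3] = conformalCompactification ![bcI] bcI bcJ := by
  ext1 a
  fin_cases a <;> rfl

theorem isCliffordFamily_minkowski :
    IsCliffordFamily ![(-1 : ℝ), -1, 1] ![mink1, mink2, mink3] := by
  have hi : IsCliffordFamily ![(-1 : ℝ)] ![bcI] :=
    .of_subsingleton fun a ↦ by simpa using bcI_mul_self
  rw [minkowski_eq_conformalCompactification]
  convert hi.conformalCompactification bcI_mul_self bcJ_mul_self
    (fun _ ↦ .all _ _) (fun _ ↦ .all _ _) (.all _ _) using 1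
  rw [neg_neg]
  ext1 a
  fin_cases a <;> rfl

theorem ads_eq_conformalCompactification :
    ![ads1, ads2, ads3, ads4, ads5] =
      conformalCompactification ![mink1, mink2, mink3] (bcI • 1) (bcJ • 1) := by
  ext1 a
  fin_cases a <;> rfl

theorem isCliffordFamily_ads :
    IsCliffordFamily ![(-1 : ℝ), -1, 1, -1, 1] ![ads1, ads2, ads3, ads4, ads5] := by
  have hcomm (z : ℂ × ℂ) (m : Matrix (Fin 2) (Fin 2) (ℂ × ℂ)) : Commute m (z • 1) :=
    (Commute.one_right m).smul_right z
  have hsq {z : ℂ × ℂ} (hz : z * z = (-1 : ℝ) • 1) :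
      (z • 1 : Matrix (Fin 2) (Fin 2) (ℂ × ℂ)) * z • 1 = (-1 : ℝ) • 1 := by
    rw [smul_mul_smul_comm, hz, mul_one, smul_assoc, one_smul]
  rw [ads_eq_conformalCompactification]
  convert isCliffordFamily_minkowski.conformalCompactification (hsq bcI_mul_self)
    (hsq bcJ_mul_self) (fun _ ↦ hcomm _ _) (fun _ ↦ hcomm _ _) (hcomm _ _) using 1
  rw [neg_neg]
  ext1 a
  fin_cases a <;> rfl

theorem adsPara_eq_paravector : adsPara = paravector ![ads1, ads2, ads3, ads4, ads5] :=
  rfl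

theorem adsParaBar_eq_paravectorConj :
    adsParaBar = paravectorConj ![ads1, ads2, ads3, ads4, ads5] := by
  simp [adsParaBar, paravectorConj]

theorem adsMetric_eq_diagonal :
    adsMetric = Matrix.diagonal (Matrix.vecCons 1 (-![-1, -1, 1, -1, 1])) := by
  ext μ ν
  simp [adsMetric, Matrix.diagonal_apply]

/-- the real product of the ambient paravectors reproduces the
metric of `ℝ^{4,2}`: `(F μ * F̄ ν + F ν * F̄ μ) / 2 = g μ ν • 1`. -/
theorem adS_real_product_metric :
    ∀ μ ν : Fin 6,
      (1 / 2 : ℝ) • (adsPara μ * adsParaBar ν + adsPara ν * adsParaBar μ) =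
        adsMetric μ ν • (1 : Matrix (Fin 2) (Fin 2) (Matrix (Fin 2) (Fin 2) (ℂ × ℂ))) := by
  intro μ ν
  rw [adsPara_eq_paravector, adsParaBar_eq_paravectorConj, adsMetric_eq_diagonal,
    isCliffordFamily_ads.paravector_mul_conj_add, smul_smul, one_div,
    inv_mul_cancel_left₀ two_ne_zero]
end

section
/- Under the stated hypotheses on s, for all μ, ν : Fin 4 (viewed inside Fin 6): [q μ, p ν] = 2 • ((g' μ ν) • d + s μ ν), where [X, Y] = X*Y − Y*X. -/
/-- The ambient metric `g = diag(1, 1, 1, -1, 1, -1)` on `ℝ^{4,2}`. -/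
def gAmb : Fin 6 → Fin 6 → ℝ :=
  fun μ ν => if μ = ν then ![1, 1, 1, -1, 1, -1] μ else 0

/-- The Minkowski metric `g' = diag(1, 1, 1, -1)`. -/
def gMink : Fin 4 → Fin 4 → ℝ :=
  fun μ ν => if μ = ν then ![1, 1, 1, -1] μ else 0

/-- The identification of `Fin 4` with the first four indices of `Fin 6`. -/
def emb : Fin 4 → Fin 6 := Fin.castLE (by omega)

/-!
Extend `s` and `g` bilinearly in the indices. If the directions `x` and `y` are orthogonal to `μ`
and `ν`, only two terms of the structure relations survive:
`⁅s μ x, s ν y⁆ = -(g μ ν • s x y) - g x y • s μ ν`.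
The operators in question are `q μ = s μ (a - b)` and `p ν = -s ν (a + b)`, and
`s (a - b) (a + b) = 2 • s a b`, `g (a - b) (a + b) = g a a - g b b`, the latter being `2` for a
spacelike `a` and a timelike `b` of unit length.
-/

/-- Kastrup's momentum operators `p μ`, with `a` and `b` the two directions added to spacetime. -/
def momentum {ι L : Type*} [AddCommGroup L] (s : ι → ι → L) (a b μ : ι) : L :=
  -s μ a - s μ b

/-- Kastrup's special conformal operators `q μ`, with `a` and `b` the two directions added to
spacetime. -/
def specialConformal {ι L : Type*} [AddCommGroup L] (s : ι → ι → L) (a b μ : ι) : L :=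
  s μ a - s μ b

section LieAlgebra

variable {R L ι : Type*} [CommRing R] [LieRing L] [LieAlgebra R L] {g : ι → ι → R} {s : ι → ι → L}

/-- The family `s` satisfies the relations of the generators of the orthogonal Lie algebra of the
bilinear form with Gram matrix `g`. The vanishing of `s μ μ` is a separate field because it does not
follow from skew-symmetry in the presence of `2`-torsion. -/
structure IsOrthogonalGenerators (g : ι → ι → R) (s : ι → ι → L) : Prop where
  self_eq_zero : ∀ μ, s μ μ = 0
  skew : ∀ μ ν, s μ ν = -s ν μ
  lie_eq : ∀ μ ν ρ σ,
    ⁅s μ ν, s ρ σ⁆ = g ν ρ • s μ σ - g μ ρ • s ν σ + g μ σ • s ν ρ - g ν σ • s μ ρ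

namespace IsOrthogonalGenerators

theorem of_skew [IsAddTorsionFree L] (skew : ∀ μ ν, s μ ν = -s ν μ)
    (lie_eq : ∀ μ ν ρ σ,
      ⁅s μ ν, s ρ σ⁆ = g ν ρ • s μ σ - g μ ρ • s ν σ + g μ σ • s ν ρ - g ν σ • s μ ρ) :
    IsOrthogonalGenerators g s where
  self_eq_zero μ := self_eq_neg.mp (skew μ μ)
  skew := skew
  lie_eq := lie_eq

theorem lie_of_orthogonal (hs : IsOrthogonalGenerators g s) {μ ν x y : ι}
    (hxν : g x ν = 0) (hμy : g μ y = 0) :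
    ⁅s μ x, s ν y⁆ = -(g μ ν • s x y) - g x y • s μ ν := by
  rw [hs.lie_eq, hxν, hμy]
  module

end IsOrthogonalGenerators

theorem conformal_q_p_commutator_general (hs : IsOrthogonalGenerators g s) {a b μ ν : ι}
    (hab : g a b = g b a) (hμa : g μ a = 0) (hμb : g μ b = 0) (haν : g a ν = 0) (hbν : g b ν = 0) :
    ⁅specialConformal s a b μ, momentum s a b ν⁆ =
      2 • g μ ν • s a b + (g a a - g b b) • s μ ν :=
  calc ⁅specialConformal s a b μ, momentum s a b ν⁆
    _ = ⁅s μ b, s ν a⁆ - ⁅s μ a, s ν b⁆ + (⁅s μ b, s ν b⁆ - ⁅s μ a, s ν a⁆) := by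
      simp only [specialConformal, momentum, sub_lie, lie_sub, lie_neg]
      abel
    _ = 2 • g μ ν • s a b + (g a a - g b b) • s μ ν := by
      rw [hs.lie_of_orthogonal hbν hμa, hs.lie_of_orthogonal haν hμb,
        hs.lie_of_orthogonal hbν hμb, hs.lie_of_orthogonal haν hμa,
        hs.self_eq_zero a, hs.self_eq_zero b, hs.skew b a, hab]
      module

end LieAlgebra

theorem gAmb_of_ne {μ ν : Fin 6} (h : μ ≠ ν) : gAmb μ ν = 0 := if_neg h

theorem gAmb_four_four : gAmb 4 4 = 1 := rfl

theorem gAmb_five_five : gAmb 5 5 = -1 := rfl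

theorem gAmb_emb_emb (μ ν : Fin 4) : gAmb (emb μ) (emb ν) = gMink μ ν := by
  fin_cases μ <;> fin_cases ν <;> simp [gAmb, gMink, emb, Fin.ext_iff]

theorem emb_ne_four (μ : Fin 4) : emb μ ≠ 4 := Fin.ne_of_lt μ.isLt

theorem emb_ne_five (μ : Fin 4) : emb μ ≠ 5 := Fin.ne_of_lt (μ.isLt.trans (by decide))

/-- if `s : Fin 6 → Fin 6 → A` is antisymmetric and satisfies
the so(4,2) commutation relations, then the Kastrup operators satisfy
`[q μ, p ν] = 2 • (g' μ ν • d + s μ ν)`. -/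
theorem conformal_q_p_commutator
    {A : Type*} [Ring A] [Algebra ℝ A]
    (s : Fin 6 → Fin 6 → A)
    (hanti : ∀ μ ν, s μ ν = -(s ν μ))
    (hcomm : ∀ μ ν ρ σ : Fin 6,
      s μ ν * s ρ σ - s ρ σ * s μ ν =
        gAmb ν ρ • s μ σ - gAmb μ ρ • s ν σ + gAmb μ σ • s ν ρ - gAmb ν σ • s μ ρ)
    (p q : Fin 4 → A) (d : A)
    (hp : ∀ μ, p μ = -(s (emb μ) 4) - s (emb μ) 5)
    (hq : ∀ μ, q μ = s (emb μ) 4 - s (emb μ) 5)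
    (hd : d = s 4 5) :
    ∀ μ ν : Fin 4,
      q μ * p ν - p ν * q μ =
        2 • (gMink μ ν • d + s (emb μ) (emb ν)) := by
  intro μ ν
  let _ : LieRing A := LieRing.ofAssociativeRing
  have : IsAddTorsionFree A := .of_isTorsionFree ℝ A
  have hs : IsOrthogonalGenerators gAmb s := .of_skew hanti hcomm
  calc q μ * p ν - p ν * q μ
    _ = ⁅specialConformal s 4 5 (emb μ), momentum s 4 5 (emb ν)⁆ := by rw [hq, hp]; rfl
    _ = 2 • gAmb (emb μ) (emb ν) • s 4 5 + (gAmb 4 4 - gAmb 5 5) • s (emb μ) (emb ν) :=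
      conformal_q_p_commutator_general hs (by simp [gAmb])
        (gAmb_of_ne (emb_ne_four μ)) (gAmb_of_ne (emb_ne_five μ))
        (gAmb_of_ne (emb_ne_four ν).symm) (gAmb_of_ne (emb_ne_five ν).symm)
    _ = 2 • (gMink μ ν • d + s (emb μ) (emb ν)) := by
      rw [gAmb_emb_emb, gAmb_four_four, gAmb_five_five, hd]
      module
end
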